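/- Let p be an odd prime and w ∈ V_5 be such that no nonzero binary quadratic form over 𝔽_p is apolar to w (i.e., w has catalecticant rank 3). Then S(w) = −p²·Σ χ(Disc(f)), where the sum runs over all classes [f] ∈ P(V_2^*) such that f² is apolar to w. -/

import Mathlib

/-!
Write `q` for the size of the finite field. For a nonzero binary form `v` there is a form `d` such
that `f² ∣ v` exactly when `f ∣ d`; for a quintic, `d` has degree at most `2`, and `v` is singular
exactly when `d` is not constant. A quadratic form `f ≠ 0` has `1 + χ(disc f)` linear factors up to
scalars, so counting the classes of linear divisors `l` of `d` with weight `1` and of quadratic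
divisors `f` of `d` with weight `-χ(disc f)` gives `1` if `d` is not constant and `0` if it is. For
`v = 0`, where every square divides `v`, the same count gives `(q + 1) - q = 1`. Hence the
indicator of the zero and singular quintics is the sum of these weights over all squares `l²` and
`f²` dividing `v`.

Summing an additive character over the multiples of a fixed square gives `0` unless the square is
apolar to `w`. If it is, the sum is the number of multiples: `q⁴` for `l²` and `q²` for `f²`. An
apolar `l²` is a quadratic form apolar to `w`, so under the rank hypothesis only the `f²` remain.
-/

open Finset

/-- Multiplication of binary forms encoded by coefficient tuples: a binary form
`∑ i, f i • x^(a-i) * y^i` of degree `a` is encoded as the tuple `f : Fin (a+1) → k`,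
and multiplication of forms is convolution of coefficient tuples. -/
def formMul {k : Type*} [CommRing k] {a b : ℕ} (f : Fin (a + 1) → k)
    (g : Fin (b + 1) → k) : Fin (a + b + 1) → k :=
  fun i => ∑ q : Fin (a + 1) × Fin (b + 1),
    if (q.1 : ℕ) + (q.2 : ℕ) = (i : ℕ) then f q.1 * g q.2 else 0

/-- The pairing `(w, v) = ∑ i, w i * v i` between `V_n` and `V_n^*`. -/
def pair {k : Type*} [CommRing k] {n : ℕ} (w v : Fin (n + 1) → k) : k :=
  ∑ i, w i * v i

/-- A binary quintic form is singular if it is nonzero and, over an algebraic closure,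
it is divisible by the square of a nonzero linear form. -/
def IsSingularQuintic {k : Type*} [Field k] (v : Fin 6 → k) : Prop :=
  v ≠ 0 ∧ ∃ (l : Fin 2 → AlgebraicClosure k) (c : Fin 4 → AlgebraicClosure k),
    l ≠ 0 ∧
    (fun i => algebraMap k (AlgebraicClosure k) (v i)) = formMul (formMul l l) c

open scoped Classical in
/-- The exponential sum `S(w)` over binary quintic forms that are zero or singular. -/
noncomputable def expSum (p : ℕ) [Fact p.Prime] (w : Fin 6 → ZMod p) : ℂ :=
  ∑ v : Fin 6 → ZMod p,
    if v = 0 ∨ IsSingularQuintic v then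
      Complex.exp (2 * Real.pi * Complex.I * ((pair w v).val : ℂ) / (p : ℂ))
    else 0

/-- The discriminant of a binary quadratic form `f₀x² + f₁xy + f₂y²`. -/
def disc {k : Type*} [CommRing k] (f : Fin 3 → k) : k := f 1 ^ 2 - 4 * f 0 * f 2

section UniqueFactorization

open UniqueFactorizationMonoid

theorem exists_forall_pow_dvd_iff_dvd {R : Type*} [CommMonoidWithZero R]
    [UniqueFactorizationMonoid R] {a : R} (ha : a ≠ 0) {n : ℕ} (hn : n ≠ 0) :
    ∃ d : R, ∀ g : R, g ^ n ∣ a ↔ g ∣ d := by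
  classical
  have : Nontrivial R := ⟨a, 0, ha⟩
  let _ : NormalizationMonoid R :=
    UniqueFactorizationMonoid.strongNormalizationMonoid.toNormalizationMonoid
  let s : Multiset R :=
    Finsupp.toMultiset ((normalizedFactors a).toFinsupp.mapRange (· / n) (Nat.zero_div n))
  have hcount : ∀ q, s.count q = (normalizedFactors a).count q / n := by
    simp [s, Finsupp.count_toMultiset]
  have hs : ∀ q ∈ s, q ∈ normalizedFactors a := fun q hq => by
    rw [← Multiset.count_pos, hcount] at hq
    exact Multiset.count_pos.1 (Nat.pos_of_div_pos hq)
  have hfactors : normalizedFactors s.prod = s := by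
    rw [normalizedFactors_prod_eq s fun q hq => irreducible_of_normalized_factor q (hs q hq),
      Multiset.map_congr rfl fun q hq => normalize_normalized_factor q (hs q hq), Multiset.map_id']
  have hprod : s.prod ≠ 0 :=
    Multiset.prod_ne_zero fun h => zero_notMem_normalizedFactors a (hs 0 h)
  refine ⟨s.prod, fun g => ?_⟩
  rcases eq_or_ne g 0 with rfl | hg
  · simp [hn, ha, hprod]
  · rw [dvd_iff_normalizedFactors_le_normalizedFactors (pow_ne_zero n hg) ha,
      dvd_iff_normalizedFactors_le_normalizedFactors hg hprod, normalizedFactors_pow, hfactors]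
    simp only [Multiset.le_iff_count, Multiset.count_nsmul, hcount,
      Nat.le_div_iff_mul_le (Nat.pos_of_ne_zero hn), mul_comm]

end UniqueFactorization

section Dehomogenization

open Polynomial

variable {k : Type*} [CommRing k] {a b n : ℕ}

/-- The dehomogenization `∑ i, v i * X ^ i` of the binary form `v`, obtained by setting `x = 1`
and `y = X`. It turns products of forms into products of polynomials, and loses only the power of
`x` dividing `v`, which is recorded by the drop in degree. -/
noncomputable def dehomogenize : (Fin (n + 1) → k) →ₗ[k] k[X] :=
  (degreeLT k (n + 1)).subtype ∘ₗ (degreeLTEquiv k (n + 1)).symm.toLinearMap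

theorem dehomogenize_apply (v : Fin (n + 1) → k) :
    dehomogenize v = ∑ i : Fin (n + 1), monomial (i : ℕ) (v i) :=
  rfl

theorem dehomogenize_injective : Function.Injective (dehomogenize (k := k) (n := n)) :=
  Subtype.val_injective.comp (degreeLTEquiv k (n + 1)).symm.injective

theorem dehomogenize_ne_zero {v : Fin (n + 1) → k} (hv : v ≠ 0) : dehomogenize v ≠ 0 :=
  (map_ne_zero_iff _ dehomogenize_injective).2 hv

theorem natDegree_dehomogenize_le (v : Fin (n + 1) → k) : (dehomogenize v).natDegree ≤ n :=
  natDegree_le_iff_degree_le.2 <| Order.lt_succ_iff.1 <| mem_degreeLT.1 <|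
    ((degreeLTEquiv k (n + 1)).symm v).2

theorem exists_dehomogenize_eq {P : k[X]} (hP : P.natDegree ≤ n) :
    ∃ v : Fin (n + 1) → k, dehomogenize v = P := by
  have hmem : P ∈ degreeLT k (n + 1) :=
    mem_degreeLT.2 ((natDegree_le_iff_degree_le.1 hP).trans_lt (by exact_mod_cast n.lt_succ_self))
  exact ⟨degreeLTEquiv k (n + 1) ⟨P, hmem⟩, by simp [dehomogenize]⟩

theorem dehomogenize_comp {K : Type*} [CommRing K] (φ : k →+* K) (v : Fin (n + 1) → k) :
    dehomogenize (φ ∘ v) = (dehomogenize v).map φ := by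
  simp [dehomogenize_apply, Polynomial.map_sum]

theorem dehomogenize_formMul (f : Fin (a + 1) → k) (g : Fin (b + 1) → k) :
    dehomogenize (formMul f g) = dehomogenize f * dehomogenize g := by
  simp only [dehomogenize_apply, formMul, map_sum, Finset.sum_mul_sum, monomial_mul_monomial]
  rw [Finset.sum_comm, Fintype.sum_prod_type]
  refine Finset.sum_congr rfl fun i _ => Finset.sum_congr rfl fun j _ => ?_
  rw [Finset.sum_eq_single (⟨i + j, by omega⟩ : Fin (a + b + 1))]
  · simp
  · intro m _ hm
    rw [if_neg fun h => hm (Fin.ext h.symm), map_zero]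
  · simp

theorem dehomogenize_linear (l : Fin 2 → k) : dehomogenize l = C (l 1) * X + C (l 0) := by
  simp [dehomogenize_apply, Fin.sum_univ_two, C_mul_X_eq_monomial, add_comm]

theorem formMul_eq_zero [IsDomain k] {f : Fin (a + 1) → k} {g : Fin (b + 1) → k} :
    formMul f g = 0 ↔ f = 0 ∨ g = 0 := by
  simp only [← map_eq_zero_iff dehomogenize dehomogenize_injective, dehomogenize_formMul,
    mul_eq_zero]

theorem formMul_self_ne_zero [IsDomain k] {f : Fin (a + 1) → k} (hf : f ≠ 0) :
    formMul f f ≠ 0 :=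
  fun h => (formMul_eq_zero.1 h).elim hf hf

theorem formMul_left_injective [IsDomain k] {f : Fin (a + 1) → k} (hf : f ≠ 0) :
    Function.Injective (formMul f : (Fin (b + 1) → k) → _) := fun g h hgh => by
  have hmul : dehomogenize f * dehomogenize g = dehomogenize f * dehomogenize h := by
    rw [← dehomogenize_formMul, hgh, dehomogenize_formMul]
  exact dehomogenize_injective (mul_left_cancel₀ (dehomogenize_ne_zero hf) hmul)

theorem formMul_add (f : Fin (a + 1) → k) (g h : Fin (b + 1) → k) :
    formMul f (g + h) = formMul f g + formMul f h :=
  dehomogenize_injective (by simp only [dehomogenize_formMul, map_add, mul_add])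

theorem formMul_smul (f : Fin (a + 1) → k) (c : k) (g : Fin (b + 1) → k) :
    formMul f (c • g) = c • formMul f g :=
  dehomogenize_injective (by simp only [dehomogenize_formMul, map_smul, mul_smul_comm])

theorem smul_formMul (c : k) (f : Fin (a + 1) → k) (g : Fin (b + 1) → k) :
    formMul (c • f) g = c • formMul f g :=
  dehomogenize_injective (by simp only [dehomogenize_formMul, map_smul, smul_mul_assoc])

end Dehomogenization

section Divisibility

open Polynomial

/-- The form `f` of degree `a` divides the form `v` of degree `n`; the cofactor is the form of
degree `n - a` with dehomogenization `g`. -/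
def FormDvd {k : Type*} [CommRing k] {a n : ℕ} (f : Fin (a + 1) → k) (v : Fin (n + 1) → k) :
    Prop :=
  ∃ g : k[X], dehomogenize v = dehomogenize f * g ∧ g.natDegree + a ≤ n

section CommRing

variable {k : Type*} [CommRing k] {a b m n : ℕ}

theorem formDvd_iff_exists_formMul_eq {f : Fin (a + 1) → k} {v : Fin (a + b + 1) → k} :
    FormDvd f v ↔ ∃ g : Fin (b + 1) → k, formMul f g = v := by
  constructor
  · rintro ⟨G, hG, hdeg⟩
    obtain ⟨g, rfl⟩ := exists_dehomogenize_eq (n := b) (P := G) (by omega)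
    exact ⟨g, dehomogenize_injective ((dehomogenize_formMul f g).trans hG.symm)⟩
  · rintro ⟨g, rfl⟩
    have hdeg := natDegree_dehomogenize_le g
    exact ⟨dehomogenize g, dehomogenize_formMul f g, by omega⟩

theorem formDvd_formMul_right (f : Fin (a + 1) → k) (g : Fin (b + 1) → k) :
    FormDvd f (formMul f g) :=
  formDvd_iff_exists_formMul_eq.2 ⟨g, rfl⟩

theorem formDvd_formMul_left (f : Fin (a + 1) → k) (g : Fin (b + 1) → k) :
    FormDvd g (formMul f g) :=
  ⟨dehomogenize f, by rw [dehomogenize_formMul, mul_comm],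
    Nat.add_le_add_right (natDegree_dehomogenize_le f) b⟩

theorem formDvd_zero {f : Fin (a + 1) → k} (h : a ≤ n) : FormDvd f (0 : Fin (n + 1) → k) :=
  ⟨0, by simp, by simpa using h⟩

theorem formDvd_refl (f : Fin (n + 1) → k) : FormDvd f f :=
  ⟨1, by simp, by simp⟩

theorem FormDvd.le {f : Fin (a + 1) → k} {v : Fin (n + 1) → k} (h : FormDvd f v) : a ≤ n := by
  obtain ⟨g, -, hdeg⟩ := h
  omega

theorem FormDvd.left_ne_zero {f : Fin (a + 1) → k} {v : Fin (n + 1) → k} (h : FormDvd f v)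
    (hv : v ≠ 0) : f ≠ 0 := by
  obtain ⟨g, hg, -⟩ := h
  rintro rfl
  exact dehomogenize_ne_zero hv (by rw [hg, map_zero, zero_mul])

theorem FormDvd.trans {f : Fin (a + 1) → k} {g : Fin (m + 1) → k} {v : Fin (n + 1) → k}
    (hfg : FormDvd f g) (hgv : FormDvd g v) : FormDvd f v := by
  obtain ⟨G, hG, hGdeg⟩ := hfg
  obtain ⟨V, hV, hVdeg⟩ := hgv
  refine ⟨G * V, by rw [hV, hG, mul_assoc], ?_⟩
  have hdeg : (G * V).natDegree ≤ G.natDegree + V.natDegree := natDegree_mul_le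
  omega

theorem FormDvd.formMul_self {f : Fin (a + 1) → k} {v : Fin (n + 1) → k} (h : FormDvd f v) :
    FormDvd (formMul f f) (formMul v v) := by
  obtain ⟨g, hg, hdeg⟩ := h
  refine ⟨g * g, by rw [dehomogenize_formMul, dehomogenize_formMul, hg, mul_mul_mul_comm], ?_⟩
  have hgg : (g * g).natDegree ≤ g.natDegree + g.natDegree := natDegree_mul_le
  omega

theorem FormDvd.comp {K : Type*} [CommRing K] (φ : k →+* K) {f : Fin (a + 1) → k}
    {v : Fin (n + 1) → k} (h : FormDvd f v) : FormDvd (φ ∘ f) (φ ∘ v) := by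
  obtain ⟨g, hg, hdeg⟩ := h
  refine ⟨g.map φ, by simp only [dehomogenize_comp, hg, Polynomial.map_mul], ?_⟩
  have hmap : (g.map φ).natDegree ≤ g.natDegree := natDegree_map_le
  omega

theorem comp_formMul {K : Type*} [CommRing K] (φ : k →+* K) (f : Fin (a + 1) → k)
    (g : Fin (b + 1) → k) : φ ∘ formMul f g = formMul (φ ∘ f) (φ ∘ g) :=
  dehomogenize_injective (by simp only [dehomogenize_comp, dehomogenize_formMul,
    Polynomial.map_mul])

theorem formDvd_iff_dvd_and_le [IsDomain k] {f : Fin (a + 1) → k} {v : Fin (n + 1) → k}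
    (hf : f ≠ 0) (hv : v ≠ 0) :
    FormDvd f v ↔ dehomogenize f ∣ dehomogenize v ∧
      (dehomogenize v).natDegree + a ≤ n + (dehomogenize f).natDegree := by
  have hdeg : ∀ {g}, dehomogenize v = dehomogenize f * g →
      (dehomogenize v).natDegree = (dehomogenize f).natDegree + g.natDegree := fun {g} hg => by
    rw [hg, natDegree_mul (dehomogenize_ne_zero hf)]
    rintro rfl
    exact dehomogenize_ne_zero hv (by rw [hg, mul_zero])
  constructor
  · rintro ⟨g, hg, hle⟩
    exact ⟨⟨g, hg⟩, by have := hdeg hg; omega⟩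
  · rintro ⟨⟨g, hg⟩, hle⟩
    exact ⟨g, hg, by have := hdeg hg; omega⟩

end CommRing

section SquareDivisors

variable {k : Type*} [Field k] {a n : ℕ}

theorem formDvd_iff_mk_eq_mk {f g : Fin (n + 1) → k} (hf : f ≠ 0) (hg : g ≠ 0) :
    FormDvd f g ↔ Projectivization.mk k f hf = Projectivization.mk k g hg := by
  rw [eq_comm, Projectivization.mk_eq_mk_iff']
  constructor
  · rintro ⟨c, hc, hdeg⟩
    rw [eq_C_of_natDegree_eq_zero (p := c) (by omega), mul_comm, ← smul_eq_C_mul, ← map_smul] at hc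
    exact ⟨_, (dehomogenize_injective hc).symm⟩
  · rintro ⟨c, rfl⟩
    exact ⟨C c, by rw [map_smul, smul_eq_C_mul, mul_comm], by simp⟩

theorem exists_forall_formMul_self_formDvd_iff_formDvd {v : Fin (n + 1) → k} (hv : v ≠ 0) :
    ∃ (m : ℕ) (d : Fin (m + 1) → k), d ≠ 0 ∧
      ∀ {a} (f : Fin (a + 1) → k), FormDvd (formMul f f) v ↔ FormDvd f d := by
  obtain ⟨P, hP⟩ := exists_forall_pow_dvd_iff_dvd (dehomogenize_ne_zero hv) two_ne_zero
  have hP0 : P ≠ 0 := by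
    rintro rfl
    exact dehomogenize_ne_zero hv (by simpa using (hP 0).2 dvd_rfl)
  have hvdeg := natDegree_dehomogenize_le v
  -- `x ^ (n - deg v)` is the exact power of `x` dividing `v`, and half of it goes into `d`.
  obtain ⟨d, hdP⟩ := exists_dehomogenize_eq
    (n := P.natDegree + (n - (dehomogenize v).natDegree) / 2) (Nat.le_add_right P.natDegree _)
  have hd : d ≠ 0 := fun h => hP0 (by rw [← hdP, h, map_zero])
  refine ⟨_, d, hd, fun {a} f => ?_⟩
  rcases eq_or_ne f 0 with rfl | hf
  · refine iff_of_false (fun h => h.left_ne_zero hv ?_) fun h => h.left_ne_zero hd rfl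
    exact formMul_eq_zero.2 (.inl rfl)
  rw [formDvd_iff_dvd_and_le (formMul_self_ne_zero hf) hv, formDvd_iff_dvd_and_le hf hd,
    dehomogenize_formMul, ← sq, hP, natDegree_pow, hdP]
  exact and_congr_right fun _ => by omega

theorem exists_linear_formDvd [IsAlgClosed k] {v : Fin (n + 1) → k} (hn : 0 < n) (hv : v ≠ 0) :
    ∃ l : Fin 2 → k, l ≠ 0 ∧ FormDvd (a := 1) l v := by
  rcases (natDegree_dehomogenize_le v).lt_or_eq with hdeg | hdeg
  · refine ⟨![1, 0], fun h => one_ne_zero (congrFun h 0), dehomogenize v, ?_, hdeg⟩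
    simp [dehomogenize_linear]
  · obtain ⟨t, ht⟩ := IsAlgClosed.exists_root (dehomogenize v) (by
      rw [degree_eq_natDegree (dehomogenize_ne_zero hv), hdeg]
      exact_mod_cast hn.ne')
    have hl : dehomogenize ![-t, 1] = X - C t := by simp [dehomogenize_linear, sub_eq_add_neg]
    have hl0 : ![-t, 1] ≠ 0 := fun h => one_ne_zero (congrFun h 1)
    refine ⟨![-t, 1], hl0, (formDvd_iff_dvd_and_le (a := 1) hl0 hv).2 ⟨?_, ?_⟩⟩
    · rw [hl]
      exact dvd_iff_isRoot.2 ht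
    · rw [hl, natDegree_X_sub_C, hdeg]

variable {K : Type*} [Field K] [Algebra k K]

theorem exists_formMul_self_formDvd_of_not_squarefree {v : Fin (n + 1) → k} (hv : v ≠ 0)
    (h : ¬ Squarefree (dehomogenize v)) :
    ∃ a, 0 < a ∧ ∃ f : Fin (a + 1) → k, FormDvd (formMul f f) v := by
  simp only [Squarefree, not_forall] at h
  obtain ⟨e, he, hu⟩ := h
  have he0 : e ≠ 0 := by
    rintro rfl
    exact dehomogenize_ne_zero hv (by simpa using he)
  obtain ⟨f, hf⟩ := exists_dehomogenize_eq le_rfl (P := e)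
  have hf0 : f ≠ 0 := fun h => he0 (by rw [← hf, h, map_zero])
  refine ⟨e.natDegree, Nat.pos_of_ne_zero fun h => hu ?_, f, ?_⟩
  · rw [isUnit_iff_degree_eq_zero, degree_eq_natDegree he0, h, Nat.cast_zero]
  · have hvdeg := natDegree_dehomogenize_le v
    rw [formDvd_iff_dvd_and_le (formMul_self_ne_zero hf0) hv, dehomogenize_formMul, hf,
      natDegree_mul he0 he0]
    exact ⟨he, by omega⟩

theorem exists_formMul_self_formDvd_of_algebraMap [PerfectField k] {v : Fin (n + 1) → k}
    (hv : v ≠ 0) {l : Fin 2 → K}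
    (h : FormDvd (formMul l l : Fin (1 + 1 + 1) → K) (algebraMap k K ∘ v)) :
    ∃ a, 0 < a ∧ ∃ f : Fin (a + 1) → k, FormDvd (formMul f f) v := by
  obtain ⟨g, hg, hgdeg⟩ := h
  rw [dehomogenize_comp, dehomogenize_formMul] at hg
  by_cases hl1 : l 1 = 0
  · have hvdeg : (dehomogenize v).natDegree ≤ g.natDegree := by
      rw [← natDegree_map (algebraMap k K), hg, dehomogenize_linear, hl1, C_0, zero_mul, zero_add,
        ← C_mul]
      exact natDegree_C_mul_le _ _
    refine ⟨1, one_pos, ![1, 0], dehomogenize v, ?_, by omega⟩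
    rw [dehomogenize_formMul (a := 1) (b := 1), dehomogenize_linear]
    simp
  · refine exists_formMul_self_formDvd_of_not_squarefree hv fun hsq => ?_
    have hsqK : Squarefree ((dehomogenize v).map (algebraMap k K)) :=
      (PerfectField.separable_iff_squarefree.2 hsq).map.squarefree
    have hdeg := natDegree_eq_zero_of_isUnit (hsqK (dehomogenize l) ⟨g, hg⟩)
    rw [dehomogenize_linear, natDegree_linear hl1] at hdeg
    exact one_ne_zero hdeg

theorem exists_linear_formMul_self_formDvd_algebraMap_iff [PerfectField k] [IsAlgClosed K]
    {v : Fin (n + 1) → k} (hv : v ≠ 0) :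
    (∃ l : Fin 2 → K, l ≠ 0 ∧
        FormDvd (formMul l l : Fin (1 + 1 + 1) → K) (algebraMap k K ∘ v)) ↔
      ∃ a, 0 < a ∧ ∃ f : Fin (a + 1) → k, FormDvd (formMul f f) v := by
  refine ⟨fun ⟨_, _, h⟩ => exists_formMul_self_formDvd_of_algebraMap hv h, ?_⟩
  rintro ⟨a, ha, f, hf⟩
  have hf0 : f ≠ 0 := fun h => hf.left_ne_zero hv (formMul_eq_zero.2 (.inl h))
  have hfK : algebraMap k K ∘ f ≠ 0 := fun h =>
    hf0 (funext fun i => (map_eq_zero (algebraMap k K)).1 (congrFun h i))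
  obtain ⟨l, hl, hlf⟩ := exists_linear_formDvd ha hfK
  refine ⟨l, hl, hlf.formMul_self.trans ?_⟩
  rw [← comp_formMul]
  exact hf.comp _

theorem isSingularQuintic_iff [PerfectField k] {v : Fin 6 → k} (hv : v ≠ 0) :
    IsSingularQuintic v ↔ ∃ a, 0 < a ∧ ∃ f : Fin (a + 1) → k, FormDvd (n := 5) (formMul f f) v := by
  rw [IsSingularQuintic, and_iff_right hv,
    ← exists_linear_formMul_self_formDvd_algebraMap_iff (n := 5) (K := AlgebraicClosure k) hv]
  refine exists_congr fun l => ?_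
  rw [exists_and_left]
  refine and_congr_right fun _ => ?_
  refine Iff.trans ?_ (formDvd_iff_exists_formMul_eq (a := 1 + 1) (b := 3)).symm
  exact exists_congr fun c => eq_comm

end SquareDivisors

end Divisibility

noncomputable local instance {k V : Type*} [Field k] [AddCommGroup V] [Module k V] [Finite V] :
    Fintype (Projectivization k V) :=
  Fintype.ofFinite _

section Quadratic

open Projectivization
open scoped LinearAlgebra.Projectivization

variable {k : Type*} [Field k]

theorem formMul_linear_linear (l m : Fin 2 → k) :
    formMul (a := 1) (b := 1) l m = ![l 0 * m 0, l 0 * m 1 + l 1 * m 0, l 1 * m 1] := by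
  ext i
  fin_cases i <;> simp [formMul, Fintype.sum_prod_type, Fin.sum_univ_two]

theorem disc_formMul (l m : Fin 2 → k) :
    disc (formMul (a := 1) (b := 1) l m) = (l 0 * m 1 - l 1 * m 0) ^ 2 := by
  rw [formMul_linear_linear]
  simp only [disc, Matrix.cons_val]
  ring

theorem disc_smul (c : k) (f : Fin 3 → k) : disc (c • f) = c ^ 2 * disc f := by
  simp only [disc, Pi.smul_apply, smul_eq_mul]
  ring

theorem mk_eq_mk_iff_sub_eq_zero {l m : Fin 2 → k} (hl : l ≠ 0) (hm : m ≠ 0) :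
    mk k l hl = mk k m hm ↔ l 0 * m 1 - l 1 * m 0 = 0 := by
  rw [eq_comm, mk_eq_mk_iff']
  constructor
  · rintro ⟨c, rfl⟩
    simp only [Pi.smul_apply, smul_eq_mul]
    ring
  · intro h
    by_cases h0 : l 0 = 0
    · have h1 : l 1 ≠ 0 := fun h1 => hl (by ext i; fin_cases i <;> assumption)
      have hm0 : m 0 = 0 := by simpa [h0, h1] using h
      refine ⟨m 1 / l 1, ?_⟩
      ext i
      fin_cases i <;> simp [h0, h1, hm0]
    · refine ⟨m 0 / l 0, ?_⟩
      ext i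
      fin_cases i <;> simp <;> field_simp
      linear_combination -h

theorem linear_formDvd_formMul_iff {l m₁ m₂ : Fin 2 → k} (hl : l ≠ 0) (hm₁ : m₁ ≠ 0)
    (hm₂ : m₂ ≠ 0) :
    FormDvd (a := 1) (n := 2) l (formMul (a := 1) (b := 1) m₁ m₂) ↔
      mk k l hl = mk k m₁ hm₁ ∨ mk k l hl = mk k m₂ hm₂ := by
  constructor
  · intro h
    obtain ⟨g, hg⟩ := (formDvd_iff_exists_formMul_eq (a := 1) (b := 1)).1 h
    rw [formMul_linear_linear, formMul_linear_linear] at hg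
    have h0 := congrFun hg 0
    have h1 := congrFun hg 1
    have h2 := congrFun hg 2
    simp only [Matrix.cons_val] at h0 h1 h2
    -- Evaluate `l * g = m₁ * m₂` at the zero `(l 1, -l 0)` of `l`.
    simp only [mk_eq_mk_iff_sub_eq_zero, ← mul_eq_zero]
    linear_combination -l 1 ^ 2 * h0 + l 0 * l 1 * h1 - l 0 ^ 2 * h2
  · rintro (h | h)
    · exact ((formDvd_iff_mk_eq_mk (n := 1) hl hm₁).2 h).trans (formDvd_formMul_right m₁ m₂)
    · exact ((formDvd_iff_mk_eq_mk (n := 1) hl hm₂).2 h).trans (formDvd_formMul_left m₁ m₂)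

theorem exists_formMul_linear_eq_of_isSquare_disc (h2 : (2 : k) ≠ 0) {f : Fin 3 → k}
    (hdisc : IsSquare (disc f)) :
    ∃ l m : Fin 2 → k, formMul (a := 1) (b := 1) l m = f := by
  obtain ⟨s, hs⟩ := hdisc
  simp only [disc] at hs
  simp only [formMul_linear_linear]
  by_cases h0 : f 0 = 0
  · refine ⟨![0, 1], ![f 1, f 2], ?_⟩
    ext i
    fin_cases i <;> simp [h0]
  · have h4 : (4 : k) ≠ 0 := by
      rw [show (4 : k) = 2 * 2 by norm_num]
      exact mul_ne_zero h2 h2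
    refine ⟨![2 * f 0, f 1 + s], ![1 / 2, (f 1 - s) / (4 * f 0)], ?_⟩
    ext i
    fin_cases i <;> simp <;> field_simp
    · ring
    · linear_combination hs

theorem card_sub_one_smul_sum {V M : Type*} [AddCommGroup V] [Module k V] [Fintype k] [Fintype V]
    [DecidableEq V] [AddCommMonoid M] {g : V → M}
    (hg : ∀ (c : kˣ) v, g (c • v) = g v) :
    ∑ v with v ≠ 0, g v = (Fintype.card k - 1) • ∑ x : ℙ k V, g x.rep := by
  classical
  let e : ℙ k V × kˣ → {v : V // v ≠ 0} := fun q =>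
    ⟨q.2 • q.1.rep, (smul_ne_zero_iff_ne q.2).2 q.1.rep_nonzero⟩
  have hbij : Function.Bijective e := by
    refine (Fintype.bijective_iff_surjective_and_card e).2 ⟨fun v => ?_,
      (Fintype.card_congr (nonZeroEquivProjectivizationProdUnits k V)).symm⟩
    obtain ⟨c, hc⟩ := exists_smul_eq_mk_rep k v.1 v.2
    exact ⟨(mk k v.1 v.2, c⁻¹), Subtype.ext (inv_smul_eq_iff.2 hc.symm)⟩
  calc ∑ v with v ≠ 0, g v = ∑ v : {v : V // v ≠ 0}, g v :=
        Finset.sum_subtype _ (by simp) g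
    _ = ∑ q : ℙ k V × kˣ, g q.1.rep :=
        (Fintype.sum_bijective e hbij _ _ fun q => (hg _ _).symm).symm
    _ = (Fintype.card k - 1) • ∑ x : ℙ k V, g x.rep := by
        simp [Fintype.sum_prod_type, Finset.sum_const, Finset.smul_sum, Fintype.card_units]

variable [Fintype k] [DecidableEq k]

theorem quadraticChar_disc_smul (c : kˣ) (f : Fin 3 → k) :
    quadraticChar k (disc (c • f)) = quadraticChar k (disc f) := by
  rw [Units.smul_def, disc_smul, map_mul, quadraticChar_sq_one' c.ne_zero, one_mul]

open scoped Classical in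
theorem card_linear_formDvd_quadratic (hk : ringChar k ≠ 2) {f : Fin 3 → k} (hf : f ≠ 0) :
    (#{x : ℙ k (Fin 2 → k) | FormDvd (a := 1) (n := 2) x.rep f} : ℤ) =
      quadraticChar k (disc f) + 1 := by
  by_cases hsq : IsSquare (disc f)
  · obtain ⟨l, m, rfl⟩ := exists_formMul_linear_eq_of_isSquare_disc (Ring.two_ne_zero hk) hsq
    obtain ⟨hl, hm⟩ := not_or.1 (mt formMul_eq_zero.2 hf)
    have hfilter : univ.filter (fun x : ℙ k (Fin 2 → k) =>
        FormDvd (a := 1) (n := 2) x.rep (formMul (a := 1) (b := 1) l m)) =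
        {mk k l hl, mk k m hm} := by
      ext x
      simp [linear_formDvd_formMul_iff x.rep_nonzero hl hm]
    rw [hfilter, disc_formMul]
    by_cases hlm : mk k l hl = mk k m hm
    · rw [hlm, (mk_eq_mk_iff_sub_eq_zero hl hm).1 hlm]
      simp
    · rw [Finset.card_pair hlm,
        quadraticChar_sq_one' (mt (mk_eq_mk_iff_sub_eq_zero hl hm).2 hlm)]
      rfl
  · rw [quadraticChar_neg_one_iff_not_isSquare.2 hsq, Finset.filter_false_of_mem]
    · simp
    · intro x _ hx
      obtain ⟨m, rfl⟩ := (formDvd_iff_exists_formMul_eq (a := 1) (b := 1)).1 hx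
      exact hsq (by rw [disc_formMul]; exact IsSquare.sq _)

theorem sum_quadraticChar_disc (hk : ringChar k ≠ 2) :
    ∑ f : Fin 3 → k, quadraticChar k (disc f) =
      (Fintype.card k - 1 : ℤ) * Fintype.card k := by
  have h4 : (4 : k) ≠ 0 := by
    rw [show (4 : k) = 2 * 2 by norm_num]
    exact mul_ne_zero (Ring.two_ne_zero hk) (Ring.two_ne_zero hk)
  have hinner : ∀ b c : k, ∑ a : k, quadraticChar k (b ^ 2 - 4 * a * c) =
      if c = 0 then Fintype.card k * quadraticChar k (b ^ 2) else 0 := fun b c => by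
    split_ifs with hc
    · simp [hc]
    · rw [← quadraticChar_sum_zero hk]
      refine Fintype.sum_equiv
        ((Equiv.mulRight₀ (4 * c) (mul_ne_zero h4 hc)).trans (Equiv.subLeft (b ^ 2))) _ _
        fun a => ?_
      exact congrArg (fun t => quadraticChar k (b ^ 2 - t)) (by change _ = a * (4 * c); ring)
  have hsq : ∑ b : k, quadraticChar k (b ^ 2) = Fintype.card k - 1 := by
    have hb : ∀ b : k, quadraticChar k (b ^ 2) = 1 - if b = 0 then 1 else 0 := fun b => by
      split_ifs with h
      · simp [h]
      · simp [quadraticChar_sq_one' h]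
    simp [hb]
  calc ∑ f : Fin 3 → k, quadraticChar k (disc f)
      = ∑ b : k, ∑ c : k, ∑ a : k, quadraticChar k (b ^ 2 - 4 * a * c) := by
        rw [← (Fin.consEquiv fun _ : Fin 3 => k).sum_comp, Fintype.sum_prod_type_right,
          ← (finTwoArrowEquiv k).symm.sum_comp, Fintype.sum_prod_type]
        rfl
    _ = (Fintype.card k - 1 : ℤ) * Fintype.card k := by
        simp only [hinner, Finset.sum_ite_eq', Finset.mem_univ, if_true]
        rw [← Finset.mul_sum, hsq, mul_comm]

theorem sum_projectivization_quadraticChar_disc (hk : ringChar k ≠ 2) :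
    ∑ x : ℙ k (Fin 3 → k), quadraticChar k (disc x.rep) = Fintype.card k := by
  have hcard : 1 < Fintype.card k := Fintype.one_lt_card
  have hsum := card_sub_one_smul_sum (g := fun f => quadraticChar k (disc f))
    quadraticChar_disc_smul
  have hzero : ∀ f : Fin 3 → k, quadraticChar k (disc f) ≠ 0 → f ≠ 0 := by
    rintro _ hf rfl
    exact hf (by simp [disc])
  rw [Finset.sum_filter_of_ne fun f _ => hzero f,
    sum_quadraticChar_disc hk, nsmul_eq_mul, Nat.cast_pred (by omega)] at hsum
  exact (mul_left_cancel₀ (by omega) hsum).symm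

end Quadratic

section Indicator

open Projectivization
open scoped LinearAlgebra.Projectivization

variable {k : Type*} [Field k] [Fintype k] [DecidableEq k]

open scoped Classical in
theorem card_linear_formDvd_sub_sum_quadraticChar (hk : ringChar k ≠ 2) {m : ℕ}
    {d : Fin (m + 1) → k} (hd : d ≠ 0) (hm : m ≤ 2) :
    (#{x : ℙ k (Fin 2 → k) | FormDvd (a := 1) x.rep d} : ℤ) -
        ∑ x : ℙ k (Fin 3 → k) with FormDvd (a := 2) x.rep d, quadraticChar k (disc x.rep) =
      if 0 < m then 1 else 0 := by
  have hself : (univ.filter fun x : ℙ k (Fin (m + 1) → k) => FormDvd x.rep d) = {mk k d hd} := by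
    ext x
    simp [formDvd_iff_mk_eq_mk x.rep_nonzero hd]
  have hlt : ∀ {a}, m < a → ∀ x : ℙ k (Fin (a + 1) → k), ¬ FormDvd x.rep d :=
    fun hma x h => hma.not_ge h.le
  interval_cases m
  · simp [hlt one_pos, hlt two_pos]
  · rw [hself]
    simp [hlt one_lt_two]
  · obtain ⟨c, hc⟩ := exists_smul_eq_mk_rep k d hd
    rw [card_linear_formDvd_quadratic hk hd, hself, Finset.sum_singleton, ← hc,
      quadraticChar_disc_smul, add_sub_cancel_left, if_pos two_pos]

open scoped Classical in
theorem ite_eq_zero_or_isSingularQuintic (hk : ringChar k ≠ 2) (v : Fin 6 → k) :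
    (if v = 0 ∨ IsSingularQuintic v then 1 else 0 : ℤ) =
      #{x : ℙ k (Fin 2 → k) | FormDvd (a := 1 + 1) (n := 5) (formMul x.rep x.rep) v} -
        ∑ x : ℙ k (Fin 3 → k) with FormDvd (a := 2 + 2) (n := 5) (formMul x.rep x.rep) v,
          quadraticChar k (disc x.rep) := by
  rcases eq_or_ne v 0 with rfl | hv
  · have hdvd : ∀ {a} (f : Fin (a + 1) → k), a ≤ 5 → FormDvd f (0 : Fin (5 + 1) → k) :=
      fun f ha => formDvd_zero ha
    have hcard : Nat.card (ℙ k (Fin 2 → k)) = Fintype.card k + 1 := by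
      rw [card_of_finrank_two k _ (by simp), Nat.card_eq_fintype_card]
    simp only [hdvd _ (show 1 + 1 ≤ 5 by norm_num), hdvd _ (show 2 + 2 ≤ 5 by norm_num),
      Finset.filter_true]
    rw [sum_projectivization_quadraticChar_disc hk, Finset.card_univ, ← Nat.card_eq_fintype_card,
      hcard]
    simp
  · obtain ⟨m, d, hd, hsq⟩ := exists_forall_formMul_self_formDvd_iff_formDvd (n := 5) hv
    have hm : m + m ≤ 5 := ((hsq d).2 (formDvd_refl d)).le
    have hsing : IsSingularQuintic v ↔ 0 < m := by
      simp only [isSingularQuintic_iff hv, hsq]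
      exact ⟨fun ⟨a, ha, f, hf⟩ => ha.trans_le hf.le, fun h => ⟨m, h, d, formDvd_refl d⟩⟩
    simp only [hv, false_or, hsing]
    rw [← card_linear_formDvd_sub_sum_quadraticChar hk hd (by omega)]
    have h1 : ∀ x : ℙ k (Fin 2 → k), FormDvd (formMul x.rep x.rep) v ↔ FormDvd x.rep d :=
      fun x => hsq (a := 1) x.rep
    have h2 : ∀ x : ℙ k (Fin 3 → k), FormDvd (formMul x.rep x.rep) v ↔ FormDvd x.rep d :=
      fun x => hsq (a := 2) x.rep
    simp only [h1, h2]

open scoped Classical in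
theorem sum_eq_zero_or_isSingularQuintic {R : Type*} [CommRing R] (hk : ringChar k ≠ 2)
    (g : (Fin 6 → k) → R) :
    ∑ v with v = 0 ∨ IsSingularQuintic v, g v =
      ∑ x : ℙ k (Fin 2 → k),
          ∑ v with FormDvd (a := 1 + 1) (n := 5) (formMul x.rep x.rep) v, g v -
        ∑ x : ℙ k (Fin 3 → k), (quadraticChar k (disc x.rep) : R) *
          ∑ v with FormDvd (a := 2 + 2) (n := 5) (formMul x.rep x.rep) v, g v := by
  have hterm : ∀ v : Fin 6 → k, (if v = 0 ∨ IsSingularQuintic v then g v else 0) =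
      ∑ x : ℙ k (Fin 2 → k),
          (if FormDvd (a := 1 + 1) (n := 5) (formMul x.rep x.rep) v then g v else 0) -
        ∑ x : ℙ k (Fin 3 → k), (quadraticChar k (disc x.rep) : R) *
          if FormDvd (a := 2 + 2) (n := 5) (formMul x.rep x.rep) v then g v else 0 := fun v => by
    have hcast := congrArg (fun z : ℤ => (z : R) * g v) (ite_eq_zero_or_isSingularQuintic hk v)
    simp only [Int.cast_ite, Int.cast_one, Int.cast_zero, ite_mul, one_mul, zero_mul,
      Finset.card_filter, Finset.sum_filter, Int.cast_sub, Int.cast_sum, Nat.cast_sum,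
      Nat.cast_ite, Nat.cast_one, Nat.cast_zero, sub_mul, Finset.sum_mul] at hcast
    simpa only [mul_ite, mul_zero] using hcast
  simp only [Finset.sum_filter, Finset.mul_sum]
  rw [Finset.sum_congr rfl fun v _ => hterm v, Finset.sum_sub_distrib, Finset.sum_comm]
  congr 1
  exact Finset.sum_comm

end Indicator

section Apolarity

open Projectivization
open scoped LinearAlgebra.Projectivization

section CommRing

variable {k : Type*} [CommRing k] {a : ℕ}

/-- The form `f` of degree `a` is apolar to `w ∈ V_{a+b}`; the degree `b` of the forms that `f` is
multiplied with is an explicit argument. -/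
def IsApolar (b : ℕ) (f : Fin (a + 1) → k) (w : Fin (a + b + 1) → k) : Prop :=
  ∀ h : Fin (b + 1) → k, pair w (formMul f h) = 0

theorem pair_eq_dotProduct (w v : Fin (a + 1) → k) : pair w v = w ⬝ᵥ v :=
  rfl

end CommRing

variable {k : Type*} [Field k] {a b : ℕ}

theorem isApolar_smul_iff {c : k} (hc : c ≠ 0) {f : Fin (a + 1) → k} {w : Fin (a + b + 1) → k} :
    IsApolar b (c • f) w ↔ IsApolar b f w :=
  forall_congr' fun h => by
    rw [pair_eq_dotProduct, pair_eq_dotProduct, smul_formMul, dotProduct_smul,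
      smul_eq_zero_iff_right hc]

theorem isApolar_formMul_rep_iff {w : Fin (a + a + b + 1) → k} (x : ℙ k (Fin (a + 1) → k)) :
    IsApolar b (formMul x.rep x.rep) w ↔
      ∃ (f : Fin (a + 1) → k) (hf : f ≠ 0), mk k f hf = x ∧ IsApolar b (formMul f f) w := by
  refine ⟨fun h => ⟨x.rep, x.rep_nonzero, x.mk_rep, h⟩, ?_⟩
  rintro ⟨f, hf, rfl, h⟩
  obtain ⟨c, hc⟩ := exists_smul_eq_mk_rep k f hf
  rwa [← hc, Units.smul_def, formMul_smul, smul_formMul, isApolar_smul_iff c.ne_zero,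
    isApolar_smul_iff c.ne_zero]

end Apolarity

section ExponentialSum

open Projectivization
open scoped LinearAlgebra.Projectivization

variable {k R : Type*} [Field k] [Fintype k] [CommRing R] [IsDomain R] {ψ : AddChar k R}

open scoped Classical in
theorem sum_formDvd_addChar (hψ : ψ.IsPrimitive) {a b : ℕ} {f : Fin (a + 1) → k} (hf : f ≠ 0)
    (w : Fin (a + b + 1) → k) :
    ∑ v with FormDvd f v, ψ (pair w v) =
      if IsApolar b f w then (Fintype.card k : R) ^ (b + 1) else 0 := by
  let φ : (Fin (b + 1) → k) →ₗ[k] k :=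
    { toFun := fun h => pair w (formMul f h)
      map_add' := fun g h => by simp only [pair_eq_dotProduct, formMul_add, dotProduct_add]
      map_smul' := fun c h => by
        simp only [pair_eq_dotProduct, formMul_smul, dotProduct_smul, RingHom.id_apply] }
  have himage : ({v | FormDvd f v} : Finset (Fin (a + b + 1) → k)) = univ.image (formMul f) := by
    ext v
    simp [formDvd_iff_exists_formMul_eq]
  have htrivial : ψ.compAddMonoidHom φ.toAddMonoidHom = 0 ↔ IsApolar b f w := by
    refine ⟨fun hzero h => ?_, fun hw => DFunLike.ext _ _ fun h => ?_⟩
    · by_contra hh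
      refine hψ hh (DFunLike.ext _ _ fun c => ?_)
      change ψ (φ h * c) = 1
      rw [mul_comm, ← smul_eq_mul, ← map_smul]
      exact DFunLike.congr_fun hzero (c • h)
    · change ψ (φ h) = 1
      rw [show φ h = 0 from hw h, AddChar.map_zero_eq_one]
  rw [himage, Finset.sum_image (formMul_left_injective hf).injOn, ← if_congr htrivial rfl rfl]
  refine (AddChar.sum_eq_ite (ψ.compAddMonoidHom φ.toAddMonoidHom)).trans ?_
  simp

open scoped Classical in
theorem stmt17_general [DecidableEq k] (hk : ringChar k ≠ 2) (hψ : ψ.IsPrimitive) (w : Fin 6 → k) :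
    ∑ v with v = 0 ∨ IsSingularQuintic v, ψ (pair w v) =
      (Fintype.card k : R) ^ 4 *
          #{x : ℙ k (Fin 2 → k) | IsApolar (a := 1 + 1) 3 (formMul x.rep x.rep) w} -
        (Fintype.card k : R) ^ 2 * ∑ᶠ x : ℙ k (Fin 3 → k),
          if ∃ (f : Fin 3 → k) (hf : f ≠ 0), mk k f hf = x ∧
              IsApolar (a := 2 + 2) 1 (formMul f f) w
          then (quadraticChar k (disc x.rep) : R) else 0 := by
  have hlin := fun x : ℙ k (Fin 2 → k) =>
    sum_formDvd_addChar (b := 3) hψ (formMul_self_ne_zero x.rep_nonzero) w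
  have hquad := fun x : ℙ k (Fin 3 → k) =>
    sum_formDvd_addChar (b := 1) hψ (formMul_self_ne_zero x.rep_nonzero) w
  have hclass := fun x : ℙ k (Fin 3 → k) => isApolar_formMul_rep_iff (b := 1) (w := w) x
  rw [sum_eq_zero_or_isSingularQuintic hk, Finset.sum_congr rfl fun x _ => hlin x,
    Finset.sum_congr rfl fun x _ => congrArg _ (hquad x), finsum_eq_sum_of_fintype,
    Finset.sum_congr rfl fun x _ => if_congr (hclass x).symm rfl rfl]
  simp [← Finset.sum_filter, mul_comm, Finset.mul_sum]

open scoped Classical in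
theorem expSum_eq_sum_stdAddChar (p : ℕ) [Fact p.Prime] (w : Fin 6 → ZMod p) :
    expSum p w = ∑ v with v = 0 ∨ IsSingularQuintic v, ZMod.stdAddChar (pair w v) := by
  rw [expSum, Finset.sum_filter]
  refine Finset.sum_congr rfl fun v _ => if_congr Iff.rfl ?_ rfl
  simpa using (ZMod.stdAddChar_coe (N := p) (pair w v).val).symm

end ExponentialSum

open scoped Classical in
/-- If `p` is an odd prime and no nonzero binary quadratic form over `𝔽_p` is apolar to
`w` (catalecticant rank 3), then `S(w) = -p²·∑ χ(Disc f)`, the sum being over classes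
`[f] ∈ ℙ(V₂^*)` with `f²` apolar to `w`. -/
theorem stmt17 (p : ℕ) [Fact p.Prime] (hp : p ≠ 2) (w : Fin 6 → ZMod p)
    (h3 : ¬ ∃ q : Fin 3 → ZMod p, q ≠ 0 ∧
      ∀ h : Fin 4 → ZMod p, pair w (formMul q h) = 0) :
    expSum p w = -(p : ℂ) ^ 2 *
      ∑ᶠ x : Projectivization (ZMod p) (Fin 3 → ZMod p),
        if ∃ (f : Fin 3 → ZMod p) (hf : f ≠ 0), Projectivization.mk (ZMod p) f hf = x ∧
            ∀ h : Fin 2 → ZMod p, pair w (formMul (formMul f f) h) = 0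
        then (quadraticChar (ZMod p) (disc x.rep) : ℂ) else 0 := by
  have hlin : ∀ l : Fin 2 → ZMod p, l ≠ 0 → ¬ IsApolar (a := 1 + 1) 3 (formMul l l) w :=
    fun l hl h => h3 ⟨_, formMul_self_ne_zero (a := 1) hl, h⟩
  rw [expSum_eq_sum_stdAddChar, stmt17_general (by rwa [ZMod.ringChar_zmod_n])
    (ZMod.isPrimitive_stdAddChar p), Finset.filter_false_of_mem fun x _ => hlin _ x.rep_nonzero]
  simp [IsApolar]
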